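/- arXiv:2205.11204 — 8 statements merged into one kernel-verified Lean document; each statement's English description precedes it below -/
import Mathlib

section
/- Every P-point contains a set of density zero: if u is a P-point on ℕ, then there exists A ∈ u with lim_{n→∞} |A ∩ {0,…,n−1}|/n = 0. (Consequently no P-point belongs to the closed set F_d = ℕ* \ ⋃{A* : A has density zero}.) -/
/-- A free ultrafilter on `ℕ`: one containing no finite set. -/
def IsFreeUF (u : Ultrafilter ℕ) : Prop := ∀ A ∈ u, Set.Infinite A

/-- A P-point: for every sequence of members there is a pseudo-intersection in the filter. -/
def IsPPoint (u : Ultrafilter ℕ) : Prop :=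
  ∀ A : ℕ → Set ℕ, (∀ n, A n ∈ u) → ∃ B ∈ u, ∀ n, (B \ A n).Finite

/-- `A ⊆ ℕ` has density zero: `|A ∩ {0,…,n−1}|/n → 0`. -/
def HasDensityZero (A : Set ℕ) : Prop :=
  Filter.Tendsto (fun n : ℕ => ((A ∩ Set.Iio n).ncard : ℝ) / n) Filter.atTop (nhds 0)

/-!
An ultrafilter contains exactly one residue class modulo each positive `m`, and that class has
upper density `1 / m`. A pseudo-intersection of these classes is contained in each of them up to a
finite set, so its upper density is at most `1 / m` for every `m`.
-/

open Filter Set Topology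
open scoped ENNReal

/-- The upper asymptotic density of a set of natural numbers, valued in `ℝ≥0∞` so that the upper
limit needs no boundedness side conditions. -/
noncomputable def upperDensity (A : Set ℕ) : ℝ≥0∞ :=
  limsup (fun n : ℕ => ((A ∩ Iio n).ncard : ℝ≥0∞) / n) atTop

section UpperDensity

variable {A B : Set ℕ}

theorem hasDensityZero_iff_upperDensity_eq_zero :
    HasDensityZero A ↔ upperDensity A = 0 := by
  have hfin (n : ℕ) : ((A ∩ Iio n).ncard : ℝ≥0∞) / n ≠ ∞ := by
    rcases eq_or_ne n 0 with rfl | hn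
    · simp
    · exact ENNReal.div_ne_top (ENNReal.natCast_ne_top _) (Nat.cast_ne_zero.2 hn)
  have htendsto : HasDensityZero A ↔
      Tendsto (fun n : ℕ => ((A ∩ Iio n).ncard : ℝ≥0∞) / n) atTop (𝓝 0) := by
    simp only [HasDensityZero, ← ENNReal.tendsto_toReal_zero_iff hfin, ENNReal.toReal_div,
      ENNReal.toReal_natCast]
  rw [htendsto]
  exact ⟨Tendsto.limsup_eq, fun h => tendsto_of_le_liminf_of_limsup_le bot_le h.le⟩

theorem upperDensity_le_of_finite_diff (h : (A \ B).Finite) :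
    upperDensity A ≤ upperDensity B := by
  have hlim : Tendsto (fun n : ℕ => ((A \ B).ncard : ℝ≥0∞) / n) atTop (𝓝 0) := by
    simpa using ENNReal.Tendsto.const_div ENNReal.tendsto_nat_nhds_top
      (Or.inr (ENNReal.natCast_ne_top (A \ B).ncard))
  have hcard (n : ℕ) : (A ∩ Iio n).ncard ≤ (A \ B).ncard + (B ∩ Iio n).ncard :=
    calc (A ∩ Iio n).ncard
        ≤ (A \ B ∪ B ∩ Iio n).ncard :=
          ncard_le_ncard (by grind) (h.union ((finite_Iio n).inter_of_right B))
      _ ≤ (A \ B).ncard + (B ∩ Iio n).ncard := ncard_union_le _ _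
  calc upperDensity A
      ≤ limsup (fun n : ℕ => ((A \ B).ncard : ℝ≥0∞) / n + ((B ∩ Iio n).ncard : ℝ≥0∞) / n)
          atTop := by
        refine limsup_le_limsup (Eventually.of_forall fun n => ?_)
        dsimp only
        rw [← ENNReal.add_div]
        gcongr
        exact_mod_cast hcard n
    _ = upperDensity B := ENNReal.limsup_add_of_left_tendsto_zero hlim _

theorem ncard_setOf_modEq_inter_Iio_le {m : ℕ} (hm : 0 < m) (r n : ℕ) :
    ({k | k ≡ r [MOD m]} ∩ Iio n).ncard ≤ n / m + 1 := by
  have hcount : ({k | k ≡ r [MOD m]} ∩ Iio n).ncard = n.count (· ≡ r [MOD m]) := by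
    rw [Nat.count_eq_card_filter_range, ← ncard_coe_finset]
    congr 1
    ext k
    simp [and_comm]
  rw [hcount, Nat.count_modEq_card _ hm]
  split_ifs <;> omega

theorem upperDensity_setOf_modEq_le {m : ℕ} (hm : 0 < m) (r : ℕ) :
    upperDensity {k | k ≡ r [MOD m]} ≤ (m : ℝ≥0∞)⁻¹ := by
  have hlim : Tendsto (fun n : ℕ => (m : ℝ≥0∞)⁻¹ + (n : ℝ≥0∞)⁻¹) atTop (𝓝 (m : ℝ≥0∞)⁻¹) := by
    simpa using tendsto_const_nhds.add ENNReal.tendsto_inv_nat_nhds_zero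
  refine le_of_le_of_eq (limsup_le_limsup ?_) hlim.limsup_eq
  filter_upwards [eventually_ne_atTop 0] with n hn
  have hdiv : ((n / m : ℕ) : ℝ≥0∞) ≤ n / m := by
    rw [ENNReal.le_div_iff_mul_le (by simp [hm.ne']) (by simp)]
    exact_mod_cast Nat.div_mul_le_self n m
  calc (({k | k ≡ r [MOD m]} ∩ Iio n).ncard : ℝ≥0∞) / n
      ≤ ((n / m : ℕ) + 1 : ℝ≥0∞) / n := by
        gcongr
        exact_mod_cast ncard_setOf_modEq_inter_Iio_le hm r n
    _ ≤ ((n : ℝ≥0∞) / m + 1) / n := by gcongr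
    _ = (m : ℝ≥0∞)⁻¹ + (n : ℝ≥0∞)⁻¹ := by
        rw [ENNReal.add_div, ENNReal.div_right_comm,
          ENNReal.div_self (Nat.cast_ne_zero.2 hn) (ENNReal.natCast_ne_top n), one_div, one_div]

end UpperDensity

theorem exists_preimage_singleton_mem_ultrafilter {α β : Type*} [Finite β] (u : Ultrafilter α)
    (f : α → β) : ∃ b, f ⁻¹' {b} ∈ u := by
  obtain ⟨b, hb⟩ := (u.map f).eq_pure_of_finite
  exact ⟨b, Ultrafilter.mem_map.1 (hb ▸ Ultrafilter.mem_pure.2 rfl)⟩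

theorem exists_setOf_modEq_mem_ultrafilter (u : Ultrafilter ℕ) {m : ℕ} (hm : 0 < m) :
    ∃ r, {k | k ≡ r [MOD m]} ∈ u := by
  have : NeZero m := ⟨hm.ne'⟩
  obtain ⟨c, hc⟩ := exists_preimage_singleton_mem_ultrafilter u (Nat.cast : ℕ → ZMod m)
  refine ⟨c.val, mem_of_superset hc fun k hk => ?_⟩
  rw [mem_ofPred_eq, ← ZMod.natCast_eq_natCast_iff, ZMod.natCast_zmod_val]
  exact hk

theorem ppoint_contains_density_zero_set (u : Ultrafilter ℕ)
    (hfree : IsFreeUF u) (hP : IsPPoint u) :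
    ∃ A ∈ u, HasDensityZero A := by
  choose r hr using fun m : ℕ => exists_setOf_modEq_mem_ultrafilter u m.succ_pos
  obtain ⟨B, hBu, hB⟩ := hP _ hr
  have hle (m : ℕ) : upperDensity B ≤ ((m + 1 : ℕ) : ℝ≥0∞)⁻¹ :=
    (upperDensity_le_of_finite_diff (hB m)).trans (upperDensity_setOf_modEq_le m.succ_pos _)
  have hzero : upperDensity B ≤ 0 :=
    ge_of_tendsto' ((tendsto_add_atTop_iff_nat 1).2 ENNReal.tendsto_inv_nat_nhds_zero) hle
  exact ⟨B, hBu, hasDensityZero_iff_upperDensity_eq_zero.2 (nonpos_iff_eq_zero.1 hzero)⟩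
end

section
/- For every infinite set X ⊆ ℕ one has limsup_{n→∞} |f⁻¹[X] ∩ {1,…,n}|/n = 1, where f is the factorial-interval map. -/
/-- The factorial-interval map: `facMap n = k` for the unique `k ≥ 1` with
`k! < n ≤ (k+1)!`, and `facMap n = 0` for `n ≤ 1`. -/
def facMap (n : ℕ) : ℕ :=
  if n ≤ 1 then 0 else Nat.findGreatest (fun k => Nat.factorial k < n) n

/-! For `k ≥ 1` the map `facMap` takes the value `k` on the block `(k!, (k+1)!]`, which fills all
but a proportion `k! / (k+1)! = 1 / (k+1)` of `{1, …, (k+1)!}`. Hence, as `k → ∞` along `X`, the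
density of the preimage of `X` in `{1, …, (k+1)!}` tends to `1`, so that `1` is a cluster point
of the densities; no density exceeds `1`. -/

open Filter Set Topology

/-- The proportion `|A ∩ {1, …, n}| / n` of elements of `A` among the first `n` positive integers,
whose limsup as `n → ∞` is the upper asymptotic density of `A`. It takes the junk value `0` at
`n = 0`. -/
noncomputable def initialDensity (A : Set ℕ) (n : ℕ) : ℝ :=
  ((A ∩ Icc 1 n).ncard : ℝ) / n

section initialDensity

theorem initialDensity_nonneg (A : Set ℕ) (n : ℕ) : 0 ≤ initialDensity A n :=
  div_nonneg (Nat.cast_nonneg _) (Nat.cast_nonneg n)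

theorem initialDensity_le_one (A : Set ℕ) (n : ℕ) : initialDensity A n ≤ 1 := by
  have hcard : (A ∩ Icc 1 n).ncard ≤ n := calc
    (A ∩ Icc 1 n).ncard ≤ (Icc 1 n).ncard := ncard_le_ncard inter_subset_right (finite_Icc 1 n)
    _ = n := by rw [← Finset.coe_Icc, ncard_coe_finset, Nat.card_Icc, Nat.add_sub_cancel]
  exact div_le_one_of_le₀ (Nat.cast_le.2 hcard) (Nat.cast_nonneg n)

variable {A : Set ℕ}

theorem one_sub_div_le_initialDensity {m n : ℕ} (hn : n ≠ 0) (hA : Ioc m n ⊆ A) :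
    1 - (m : ℝ) / n ≤ initialDensity A n := by
  have hsub : Ioc m n ⊆ A ∩ Icc 1 n := fun _ hx ↦ ⟨hA hx, Nat.one_le_of_lt hx.1, hx.2⟩
  have hcard : n - m ≤ (A ∩ Icc 1 n).ncard := calc
    n - m = (Ioc m n).ncard := by rw [← Finset.coe_Ioc, ncard_coe_finset, Nat.card_Ioc]
    _ ≤ (A ∩ Icc 1 n).ncard := ncard_le_ncard hsub ((finite_Icc 1 n).inter_of_right A)
  calc
    1 - (m : ℝ) / n = ((n : ℝ) - m) / n := by
      rw [sub_div, div_self (Nat.cast_ne_zero.2 hn)]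
    _ ≤ initialDensity A n := by
      unfold initialDensity
      gcongr
      exact sub_le_iff_le_add.2 (mod_cast Nat.sub_le_iff_le_add.1 hcard)

variable {ι : Type*} {l : Filter ι} {a b : ι → ℕ}

theorem tendsto_initialDensity_of_Ioc_subset (hb : ∀ᶠ i in l, b i ≠ 0)
    (hab : Tendsto (fun i ↦ (a i : ℝ) / b i) l (𝓝 0)) (hA : ∀ᶠ i in l, Ioc (a i) (b i) ⊆ A) :
    Tendsto (fun i ↦ initialDensity A (b i)) l (𝓝 1) := by
  have hlower : Tendsto (fun i ↦ 1 - (a i : ℝ) / b i) l (𝓝 1) := by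
    simpa only [sub_zero] using hab.const_sub 1
  refine tendsto_of_tendsto_of_tendsto_of_le_of_le' hlower tendsto_const_nhds ?_
    (.of_forall fun i ↦ initialDensity_le_one A (b i))
  filter_upwards [hb, hA] with i hbi hAi using one_sub_div_le_initialDensity hbi hAi

theorem limsup_initialDensity_eq_one_of_tendsto [l.NeBot] (hb : Tendsto b l atTop)
    (h : Tendsto (fun i ↦ initialDensity A (b i)) l (𝓝 1)) :
    limsup (initialDensity A) atTop = 1 := by
  have hcluster : MapClusterPt 1 atTop (initialDensity A) := .of_comp hb h.mapClusterPt
  refine le_antisymm ?_ (hcluster.le_limsup (isBoundedUnder_of ⟨1, initialDensity_le_one A⟩))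
  exact limsup_le_of_le (isCoboundedUnder_le_of_le atTop (initialDensity_nonneg A))
    (.of_forall (initialDensity_le_one A))

end initialDensity

theorem tendsto_factorial_div_factorial_succ :
    Tendsto (fun k : ℕ ↦ (k.factorial : ℝ) / (k + 1).factorial) atTop (𝓝 0) := by
  refine tendsto_one_div_add_atTop_nhds_zero_nat.congr fun k ↦ ?_
  have hk : (k.factorial : ℝ) ≠ 0 := mod_cast k.factorial_ne_zero
  rw [Nat.factorial_succ, Nat.cast_mul, Nat.cast_succ]
  field_simp

theorem facMap_eq_of_mem_Ioc {k n : ℕ} (hn : n ∈ Ioc k.factorial (k + 1).factorial) :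
    facMap n = k := by
  obtain ⟨hlt, hle⟩ := hn
  have hn_one : ¬n ≤ 1 := (Nat.lt_of_le_of_lt k.factorial_pos hlt).not_ge
  have hkn : k ≤ n := k.self_le_factorial.trans hlt.le
  rw [facMap, if_neg hn_one, Nat.findGreatest_eq_iff]
  exact ⟨hkn, fun _ ↦ hlt, fun _ hkj _ ↦ (hle.trans (Nat.factorial_le hkj)).not_gt⟩

theorem Ioc_factorial_subset_facMap_preimage {X : Set ℕ} {k : ℕ} (hk : k ∈ X) :
    Ioc k.factorial (k + 1).factorial ⊆ facMap ⁻¹' X :=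
  fun _ hn ↦ mem_preimage.2 ((facMap_eq_of_mem_Ioc hn).symm ▸ hk)

theorem limsup_density_facMap_preimage (X : Set ℕ) (hX : X.Infinite) :
    Filter.limsup
      (fun n : ℕ => (((facMap ⁻¹' X) ∩ Set.Icc 1 n).ncard : ℝ) / n)
      Filter.atTop = 1 := by
  have : (atTop ⊓ 𝓟 X).NeBot :=
    frequently_mem_iff_neBot.1 (Nat.frequently_atTop_iff_infinite.2 hX)
  have hle : atTop ⊓ 𝓟 X ≤ atTop := inf_le_left
  have hfac : Tendsto (fun k ↦ (k + 1).factorial) (atTop ⊓ 𝓟 X) atTop :=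
    (factorial_tendsto_atTop.comp (tendsto_add_atTop_nat 1)).mono_left hle
  have hblocks : ∀ᶠ k in atTop ⊓ 𝓟 X, Ioc k.factorial (k + 1).factorial ⊆ facMap ⁻¹' X :=
    eventually_inf_principal.2 (.of_forall fun _ ↦ Ioc_factorial_subset_facMap_preimage)
  have hdensity : Tendsto (fun k ↦ initialDensity (facMap ⁻¹' X) (k + 1).factorial)
      (atTop ⊓ 𝓟 X) (𝓝 1) :=
    tendsto_initialDensity_of_Ioc_subset (.of_forall fun k ↦ (k + 1).factorial_ne_zero)
      (tendsto_factorial_div_factorial_succ.mono_left hle) hblocks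
  exact limsup_initialDensity_eq_one_of_tendsto hfac hdensity
end

section
/- For every free ultrafilter u on ℕ there exists a free ultrafilter v on ℕ such that the image ultrafilter of v under f equals u (that is, {X ⊆ ℕ : f⁻¹[X] ∈ v} = u) and for every member A of v the series ∑_{n ∈ A} 1/n diverges. (In other words, the extension of f to βℕ maps F_Σ onto ℕ*.) -/
/-!
The sets on which `∑ 1 / n` converges form an ideal; let `F` be its dual filter. Among the `n` with
`facMap n = k ≥ 1` are `k! + 1, …, 2 * k!`, whose reciprocals add up to at least `1 / 2`. By the
Cauchy criterion, `∑ 1 / n` then diverges over `facMap ⁻¹' X` for every infinite `X`; in terms of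
filters, `cofinite ≤ map facMap F`. A free ultrafilter therefore lies below `map facMap F`, so it is
the image of an ultrafilter `v ≤ F`, and `v ≤ F` says that `∑ 1 / n` diverges over every member
of `v`.
-/

open Filter Topology

variable {α β E : Type*}

theorem exists_ultrafilter_le_map_eq {f : α → β} {l : Filter α} {u : Ultrafilter β}
    (h : ↑u ≤ map f l) : ∃ v : Ultrafilter α, ↑v ≤ l ∧ v.map f = u := by
  have : (l ⊓ comap f u).NeBot := by
    rw [neBot_inf_comap_iff_map, inf_eq_right.2 h]
    exact u.neBot
  obtain ⟨v, hv⟩ := Ultrafilter.exists_le (l ⊓ comap f u)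
  exact ⟨v, hv.trans inf_le_left,
    Ultrafilter.coe_le_coe.1 (map_le_iff_le_comap.2 (hv.trans inf_le_right))⟩

theorem isFreeUF_iff_le_cofinite {u : Ultrafilter ℕ} : IsFreeUF u ↔ ↑u ≤ (cofinite : Filter ℕ) := by
  refine ⟨fun hu A hA => ?_, fun hu A hA hfin => ?_⟩
  · by_contra hAu
    exact hu Aᶜ (Ultrafilter.compl_mem_iff_notMem.2 hAu) (mem_cofinite.1 hA)
  · exact compl_notMem hA (hu hfin.compl_mem_cofinite)

theorem summable_indicator_of_finite [AddCommMonoid E] [TopologicalSpace E] {w : α → E} {A : Set α}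
    (hA : A.Finite) : Summable (A.indicator w) :=
  summable_of_hasFiniteSupport (hA.subset Set.support_indicator_subset)

/-- The fibres of `f` are uniformly non-negligible for the weight `w`: some neighbourhood of `0` is
escaped by a finite partial sum of `w` over each fibre, with finitely many exceptions. -/
def HasHeavyFibers [AddCommMonoid E] [TopologicalSpace E] (w : α → E) (f : α → β) : Prop :=
  ∃ U ∈ 𝓝 (0 : E), ∀ᶠ b in cofinite, ∃ t : Finset α, (∀ a ∈ t, f a = b) ∧ ∑ a ∈ t, w a ∉ U

theorem HasHeavyFibers.finite_of_summable_indicator_preimage [AddCommGroup E] [TopologicalSpace E]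
    [IsTopologicalAddGroup E] {w : α → E} {f : α → β} (hf : HasHeavyFibers w f) {X : Set β}
    (hX : Summable ((f ⁻¹' X).indicator w)) : X.Finite := by
  classical
  obtain ⟨U, hU, hheavy⟩ := hf
  obtain ⟨s, hs⟩ := hX.vanishing hU
  by_contra hinf
  have hfresh : ∀ᶠ b in cofinite, b ∉ s.image f := (s.image f).finite_toSet.compl_mem_cofinite
  obtain ⟨b, hbX, hbs, t, htb, htU⟩ :=
    ((frequently_cofinite_mem_iff_infinite.2 hinf).and_eventually (hfresh.and hheavy)).exists
  have hdisj : Disjoint t s := Finset.disjoint_left.2 fun a hat has =>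
    hbs (htb a hat ▸ Finset.mem_image_of_mem f has)
  have hsum : ∑ a ∈ t, (f ⁻¹' X).indicator w a = ∑ a ∈ t, w a :=
    Finset.sum_congr rfl fun a hat => Set.indicator_of_mem (by rwa [Set.mem_preimage, htb a hat]) w
  exact htU (hsum ▸ hs t hdisj)

section SummableIdeal

variable [AddCommGroup E] [UniformSpace E] [IsUniformAddGroup E] [CompleteSpace E]
  {w : α → E} {f : α → β}

theorem summable_indicator_mono {A B : Set α} (hB : Summable (B.indicator w)) (hAB : A ⊆ B) :
    Summable (A.indicator w) := by
  simpa only [Set.indicator_indicator, Set.inter_eq_left.2 hAB] using hB.indicator A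

theorem summable_indicator_union {A B : Set α} (hA : Summable (A.indicator w))
    (hB : Summable (B.indicator w)) : Summable ((A ∪ B).indicator w) := by
  rw [← Set.union_sdiff_self, Set.indicator_union_of_disjoint Set.disjoint_sdiff_right]
  exact hA.add (summable_indicator_mono hB Set.sdiff_subset)

/-- The dual filter of the summable ideal of `w`: the sets over whose complement the sum of `w`
converges unconditionally. The ultrafilters below it are those containing no set over which `w` is
summable; for `w n = 1 / n` they form the set `F_Σ`. -/
def coSummable (w : α → E) : Filter α :=
  comk (fun A => Summable (A.indicator w)) (summable_indicator_of_finite Set.finite_empty)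
    (fun _ hB _ hAB => summable_indicator_mono hB hAB)
    (fun _ hA _ hB => summable_indicator_union hA hB)

theorem mem_coSummable {A : Set α} : A ∈ coSummable w ↔ Summable (Aᶜ.indicator w) :=
  mem_comk

theorem coSummable_le_cofinite (w : α → E) : coSummable w ≤ cofinite :=
  fun _ hA => mem_coSummable.2 (summable_indicator_of_finite hA)

theorem not_summable_indicator_of_mem_of_le_coSummable {l : Filter α} [l.NeBot]
    (hl : l ≤ coSummable w) {A : Set α} (hA : A ∈ l) : ¬ Summable (A.indicator w) := fun hs =>
  compl_notMem hA (hl (mem_coSummable.2 (by rwa [compl_compl])))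

theorem HasHeavyFibers.cofinite_le_map_coSummable (hf : HasHeavyFibers w f) :
    cofinite ≤ map f (coSummable w) := fun _ hX =>
  hf.finite_of_summable_indicator_preimage (mem_coSummable.1 hX)

theorem facMap_maps_FSigma_onto_Nstar_general (hf : HasHeavyFibers w f) {u : Ultrafilter β}
    (hu : ↑u ≤ (cofinite : Filter β)) :
    ∃ v : Ultrafilter α, ↑v ≤ (cofinite : Filter α) ∧ v.map f = u ∧
      ∀ A ∈ v, ¬ Summable (A.indicator w) := by
  obtain ⟨v, hv, hvu⟩ := exists_ultrafilter_le_map_eq (hu.trans hf.cofinite_le_map_coSummable)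
  exact ⟨v, hv.trans (coSummable_le_cofinite w), hvu,
    fun _ hA => not_summable_indicator_of_mem_of_le_coSummable hv hA⟩

end SummableIdeal

theorem facMap_eq_of_factorial_lt_of_le_factorial_succ {k n : ℕ} (hlt : k.factorial < n)
    (hle : n ≤ (k + 1).factorial) : facMap n = k := by
  have hn : ¬ n ≤ 1 := (Nat.lt_of_le_of_lt k.factorial_pos hlt).not_ge
  rw [facMap, if_neg hn, Nat.findGreatest_eq_iff]
  exact ⟨k.self_le_factorial.trans hlt.le, fun _ => hlt,
    fun m hm _ => (hle.trans (Nat.factorial_le hm)).not_gt⟩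

theorem half_le_sum_Ioc_one_div {K : Type*} [Field K] [LinearOrder K] [IsStrictOrderedRing K]
    {m : ℕ} (hm : 0 < m) : (1 / 2 : K) ≤ ∑ n ∈ Finset.Ioc m (2 * m), (1 : K) / n := by
  have hterm : ∀ n ∈ Finset.Ioc m (2 * m), 1 / (2 * m : K) ≤ 1 / n := fun n hn => by
    obtain ⟨hmn, hnm⟩ := Finset.mem_Ioc.1 hn
    exact one_div_le_one_div_of_le (mod_cast hm.trans hmn) (mod_cast hnm)
  calc (1 / 2 : K) = (Finset.Ioc m (2 * m)).card • (1 / (2 * m : K)) := by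
        rw [Nat.card_Ioc, two_mul, Nat.add_sub_cancel, nsmul_eq_mul]
        field_simp
    _ ≤ ∑ n ∈ Finset.Ioc m (2 * m), (1 : K) / n := Finset.card_nsmul_le_sum _ _ _ hterm

theorem hasHeavyFibers_facMap : HasHeavyFibers (fun n : ℕ => (1 : ℝ) / n) facMap := by
  refine ⟨Set.Iio (1 / 2), Iio_mem_nhds (by norm_num), ?_⟩
  filter_upwards [(Set.finite_singleton 0).compl_mem_cofinite] with k hk
  refine ⟨Finset.Ioc k.factorial (2 * k.factorial), fun n hn => ?_,
    Set.notMem_Iio.2 (half_le_sum_Ioc_one_div k.factorial_pos)⟩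
  obtain ⟨hlt, hle⟩ := Finset.mem_Ioc.1 hn
  have htwo : 2 ≤ k + 1 := Nat.succ_le_succ (Nat.pos_of_ne_zero hk)
  exact facMap_eq_of_factorial_lt_of_le_factorial_succ hlt
    (hle.trans (Nat.mul_le_mul_right k.factorial htwo))

theorem facMap_maps_FSigma_onto_Nstar (u : Ultrafilter ℕ) (hu : IsFreeUF u) :
    ∃ v : Ultrafilter ℕ, IsFreeUF v ∧ Ultrafilter.map facMap v = u ∧
      ∀ A ∈ v, ¬ Summable (Set.indicator A (fun n : ℕ => (1 : ℝ) / n)) := by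
  simp only [isFreeUF_iff_le_cofinite] at hu ⊢
  exact facMap_maps_FSigma_onto_Nstar_general hasHeavyFibers_facMap hu
end

section
/- ℕ has a universal permutation: if σ is a permutation of ℕ that has, for every m ≥ 1, infinitely many orbits of cardinality m, and also infinitely many infinite orbits, then for every permutation g of ℕ there exists an injection e : ℕ → ℕ such that σ(e(n)) = e(g(n)) for all n ∈ ℕ. -/
/-- The orbit of `n` under the permutation `σ` of `ℕ`. -/
def permOrbit (σ : Equiv.Perm ℕ) (n : ℕ) : Set ℕ :=
  Set.range fun k : ℤ => (σ ^ k) n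

/-!
A permutation is an action of `ℤ`. An orbit is determined up to isomorphism by the stabilizer of a
point, and a subgroup of `ℤ` is determined by its index, so an orbit of a permutation is determined
by its cardinality. Since `g` has only countably many orbits and `σ` has infinitely many orbits of
each cardinality, the orbits of `g` can be sent to pairwise distinct orbits of `σ` of the same
cardinality; transporting each orbit equivariantly gives the embedding.
-/

theorem exists_injective_forall_mem_of_infinite {ι γ : Type*} [Countable ι] {S : ι → Set γ}
    (hS : ∀ i, (S i).Infinite) : ∃ f : ι → γ, Function.Injective f ∧ ∀ i, f i ∈ S i := by
  classical
  obtain ⟨c, hc⟩ := Countable.exists_injective_nat ι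
  choose T hTS hTcard using fun i => (hS i).exists_subset_card_eq (c i + 1)
  -- Hall's condition: the member `i` of `s` with `c i` largest already gives `s.card ≤ (T i).card`.
  have hall (s : Finset ι) : s.card ≤ (s.biUnion T).card := by
    obtain rfl | hs := s.eq_empty_or_nonempty
    · simp
    obtain ⟨i, his, hmax⟩ := s.exists_max_image c hs
    calc s.card = (s.image c).card := (Finset.card_image_of_injective s hc).symm
      _ ≤ (Finset.range (c i + 1)).card := Finset.card_le_card <| Finset.image_subset_iff.2
          fun j hj => Finset.mem_range_succ_iff.2 (hmax j hj)
      _ = (T i).card := by rw [Finset.card_range, hTcard]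
      _ ≤ (s.biUnion T).card := Finset.card_le_card (Finset.subset_biUnion_of_mem T his)
  obtain ⟨f, hf, hfT⟩ := (Finset.all_card_le_biUnion_card_iff_exists_injective T).1 hall
  exact ⟨f, hf, fun i => hTS i (hfT i)⟩

section GroupAction

open MulAction

variable {G α β : Type*} [Group G] [MulAction G α] [MulAction G β]

theorem smul_eq_smul_iff_of_stabilizer_eq {a : α} {b : β}
    (h : stabilizer G a = stabilizer G b) (k l : G) : k • a = l • a ↔ k • b = l • b := by
  simp only [← inv_smul_eq_iff (g := l), smul_smul, ← mem_stabilizer_iff, h]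

theorem exists_injective_mulActionHom_of_stabilizer_eq {b : orbitRel.Quotient G β → α}
    (hstab : ∀ q, stabilizer G (b q) = stabilizer G q.out)
    (horb : Function.Injective fun q => orbit G (b q)) :
    ∃ e : β →[G] α, Function.Injective e := by
  let q (x : β) : orbitRel.Quotient G β := Quotient.mk _ x
  have hmem (x : β) : ∃ k : G, k • (q x).out = x :=
    mem_orbit_symm.1 (Quotient.mk_out (s := orbitRel G β) x)
  choose k hk using hmem
  have transfer (x : β) (g h : G) : g • b (q x) = h • b (q x) ↔ g • (q x).out = h • (q x).out :=
    smul_eq_smul_iff_of_stabilizer_eq (hstab _) g h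
  have hq (g : G) (x : β) : q (g • x) = q x := Quotient.sound ⟨g, rfl⟩
  refine ⟨⟨fun x => k x • b (q x), fun g x => ?_⟩, fun x y hxy => ?_⟩
  · change k (g • x) • b (q (g • x)) = g • k x • b (q x)
    rw [hq, smul_smul, transfer, mul_smul, hk, ← hq g x, hk]
  · change k x • b (q x) = k y • b (q y) at hxy
    have hqxy : q x = q y := horb <| by
      simpa only [orbit_smul] using congrArg (orbit G) hxy
    calc x = k x • (q x).out := (hk x).symm
      _ = k y • (q x).out := (transfer x _ _).1 (by rw [hxy, hqxy])
      _ = y := by rw [hqxy, hk]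

theorem exists_injective_mulActionHom_of_infinite_orbits [Countable β]
    (h : ∀ x : β, {O : Set α | ∃ a, O = orbit G a ∧ stabilizer G a = stabilizer G x}.Infinite) :
    ∃ e : β →[G] α, Function.Injective e := by
  obtain ⟨O, hO, hOmem⟩ :=
    exists_injective_forall_mem_of_infinite fun q : orbitRel.Quotient G β => h q.out
  choose b hb hstab using hOmem
  exact exists_injective_mulActionHom_of_stabilizer_eq hstab (by simpa only [← hb] using hO)

end GroupAction

theorem int_zmultiples_index (H : AddSubgroup ℤ) :
    AddSubgroup.zmultiples (H.index : ℤ) = H := by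
  obtain ⟨a, rfl⟩ := Int.subgroup_cyclic H
  rw [← AddSubgroup.zmultiples_eq_closure, Int.index_zmultiples, Int.zmultiples_natAbs]

theorem int_addSubgroup_index_injective :
    Function.Injective (AddSubgroup.index : AddSubgroup ℤ → ℕ) := fun H K h => by
  rw [← int_zmultiples_index H, h, int_zmultiples_index]

open MulAction in
theorem stabilizer_int_eq_of_ncard_orbit_eq {α β : Type*} [MulAction (Multiplicative ℤ) α]
    [MulAction (Multiplicative ℤ) β] {a : α} {b : β}
    (h : (orbit (Multiplicative ℤ) a).ncard = (orbit (Multiplicative ℤ) b).ncard) :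
    stabilizer (Multiplicative ℤ) a = stabilizer (Multiplicative ℤ) b := by
  rw [← index_stabilizer, ← index_stabilizer] at h
  exact Subgroup.toAddSubgroup'.injective (int_addSubgroup_index_injective h)

-- Orbits are nonempty, so `ncard = 0` means that the orbit is infinite.
open MulAction in
theorem universal_permutation_of_Nat_general {α β : Type*} [Countable β] (σ : Equiv.Perm α)
    (g : Equiv.Perm β)
    (h : ∀ x, {O : Set α | (∃ a, O = {y | σ.SameCycle a y}) ∧
      O.ncard = {y | g.SameCycle x y}.ncard}.Infinite) :
    ∃ e : β → α, Function.Injective e ∧ ∀ x, σ (e x) = e (g x) := by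
  let : MulAction (Multiplicative ℤ) α := .compHom α (zpowersHom (Equiv.Perm α) σ)
  let : MulAction (Multiplicative ℤ) β := .compHom β (zpowersHom (Equiv.Perm β) g)
  have horbits (x : β) : {O : Set α | ∃ a, O = orbit (Multiplicative ℤ) a ∧
      stabilizer (Multiplicative ℤ) a = stabilizer (Multiplicative ℤ) x}.Infinite := by
    refine (h x).mono ?_
    -- `{y | σ.SameCycle a y}` unfolds to the orbit of `a` under the action of `ℤ` defined by `σ`.
    rintro _ ⟨⟨a, rfl⟩, hcard⟩
    exact ⟨a, rfl, stabilizer_int_eq_of_ncard_orbit_eq hcard⟩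
  obtain ⟨e, he⟩ := exists_injective_mulActionHom_of_infinite_orbits horbits
  refine ⟨e, he, fun x => ?_⟩
  have hzpow : (σ ^ (1 : ℤ)) (e x) = e ((g ^ (1 : ℤ)) x) :=
    (map_smul e (Multiplicative.ofAdd (1 : ℤ)) x).symm
  rwa [zpow_one, zpow_one] at hzpow

theorem universal_permutation_of_Nat (σ : Equiv.Perm ℕ)
    (hfin : ∀ m : ℕ, 1 ≤ m →
      {O : Set ℕ | (∃ n, O = permOrbit σ n) ∧ O.ncard = m}.Infinite)
    (hinf : {O : Set ℕ | (∃ n, O = permOrbit σ n) ∧ O.Infinite}.Infinite)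
    (g : Equiv.Perm ℕ) :
    ∃ e : ℕ → ℕ, Function.Injective e ∧ ∀ n, σ (e n) = e (g n) :=
  universal_permutation_of_Nat_general σ g fun n => (permOrbit g n).ncard.eq_zero_or_pos.elim
    (fun h => hinf.mono fun _ hO => ⟨hO.1, hO.2.ncard.trans h.symm⟩) (hfin _)
end

section
/- If h : βℕ → βℕ is continuous and injective (hence a topological embedding, βℕ being compact Hausdorff), then there exists a single map g : ℕ → ℕ such that for every ultrafilter p on ℕ the image of h(p) under g equals p, i.e. {X ⊆ ℕ : g⁻¹[X] ∈ h(p)} = p. In particular, p ≤_RF q implies p ≤_RK q. -/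
/-!
The points `h (pure a)` form a discrete subset of the space of ultrafilters on `β`, so for each `a`
there is a set that belongs to `h (pure a)` and to no other `h (pure b)`. There are only countably
many `a`, so sending `x` to the first `a` whose set contains `x` defines a map `g` with
`Ultrafilter.map g (h (pure a)) = pure a`. The maps `Ultrafilter.map g ∘ h` and `id` are continuous
and agree on the principal ultrafilters, which are dense; hence they agree everywhere.
-/

open Filter Function Topology

section

variable {α β : Type*}

theorem exists_forall_tendsto_pure_of_separated [Countable α] [Nonempty α] {l : α → Filter β}
    {A : α → Set β} (hmem : ∀ a, A a ∈ l a) (hsep : Pairwise fun a b ↦ ∀ᶠ x in l a, x ∉ A b) :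
    ∃ g : β → α, ∀ a, Tendsto g (l a) (pure a) := by
  obtain ⟨rank, hrank⟩ := exists_injective_nat α
  have exists_first (x : β) : ∃ a, ∀ b, x ∈ A b → MinimalFor (x ∈ A ·) rank a := by
    by_cases hx : ∃ b, x ∈ A b
    · exact (exists_minimalFor_of_wellFoundedLT (x ∈ A ·) rank hx).imp fun _ ha _ _ ↦ ha
    · exact ⟨Classical.arbitrary α, fun b hb ↦ (hx ⟨b, hb⟩).elim⟩
  choose g hg using exists_first
  refine ⟨g, fun a ↦ tendsto_pure.2 ?_⟩
  have finite_earlier : {b | rank b < rank a}.Finite :=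
    (Set.finite_Iio (rank a)).preimage hrank.injOn
  have notMem_earlier : ∀ᶠ x in l a, ∀ b ∈ {b | rank b < rank a}, x ∉ A b :=
    (eventually_all_finite finite_earlier).2 fun b hb ↦
      hsep fun hab ↦ hb.ne (congrArg rank hab.symm)
  filter_upwards [hmem a, notMem_earlier] with x hxa hx
  have hfirst : MinimalFor (x ∈ A ·) rank (g x) := hg x a hxa
  have rank_ge : rank a ≤ rank (g x) := not_lt.1 fun hlt ↦ hx (g x) hlt hfirst.prop
  exact hrank ((hfirst.le hxa).antisymm rank_ge)

theorem exists_mem_ultrafilter_iff_eq_of_isInducing [TopologicalSpace α] [DiscreteTopology α]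
    {u : α → Ultrafilter β} (hu : IsInducing u) (a : α) : ∃ A : Set β, ∀ b, A ∈ u b ↔ b = a := by
  obtain ⟨V, hV, hVa⟩ := hu.isOpen_iff.1 (isOpen_discrete {a})
  have hmem (b : α) : u b ∈ V ↔ b = a := Set.ext_iff.1 hVa b
  obtain ⟨_, ⟨A, rfl⟩, hA, hAV⟩ :=
    ultrafilterBasis_is_basis.exists_subset_of_mem_open ((hmem a).2 rfl) hV
  exact ⟨A, fun b ↦ ⟨fun hb ↦ (hmem b).1 (hAV hb), fun hb ↦ hb ▸ hA⟩⟩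

theorem exists_forall_ultrafilter_map_eq_pure_of_isInducing [Countable α] [Nonempty α]
    [TopologicalSpace α] [DiscreteTopology α] {u : α → Ultrafilter β} (hu : IsInducing u) :
    ∃ g : β → α, ∀ a, (u a).map g = pure a := by
  choose A hA using exists_mem_ultrafilter_iff_eq_of_isInducing hu
  obtain ⟨g, hg⟩ := exists_forall_tendsto_pure_of_separated (l := fun a ↦ (u a : Filter β))
    (fun a ↦ (hA a a).2 rfl)
    (fun a b hab ↦ Ultrafilter.eventually_not.2 fun h ↦ hab ((hA b a).1 h))
  exact ⟨g, fun a ↦ Ultrafilter.coe_le_coe.1 (hg a)⟩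

theorem continuous_ultrafilter_map (g : β → α) : Continuous (Ultrafilter.map g) := by
  refine continuous_generateFrom_iff.2 ?_
  rintro _ ⟨s, rfl⟩
  exact ultrafilter_isOpen_basic (g ⁻¹' s)

theorem embedding_betaN_gives_RK_map_general [Countable α] [Nonempty α]
    {h : Ultrafilter α → Ultrafilter β} (hcont : Continuous h) (hinj : Injective h) :
    ∃ g : β → α, LeftInverse (Ultrafilter.map g) h := by
  let : TopologicalSpace α := ⊥
  have : DiscreteTopology α := ⟨rfl⟩
  have hu : IsInducing (h ∘ (pure : α → Ultrafilter α)) :=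
    (hcont.isClosedEmbedding hinj).isInducing.comp isDenseInducing_pure.isInducing
  obtain ⟨g, hg⟩ := exists_forall_ultrafilter_map_eq_pure_of_isInducing hu
  exact ⟨g, congrFun (denseRange_pure.equalizer ((continuous_ultrafilter_map g).comp hcont)
    continuous_id (funext hg))⟩

end

theorem embedding_betaN_gives_RK_map (h : Ultrafilter ℕ → Ultrafilter ℕ)
    (hcont : Continuous h) (hinj : Function.Injective h) :
    ∃ g : ℕ → ℕ, ∀ p : Ultrafilter ℕ, Ultrafilter.map g (h p) = p :=
  embedding_betaN_gives_RK_map_general hcont hinj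
end

section
/- Every P-point is a nowhere dense ultrafilter: if p is a P-point on ℕ and x : ℕ → ℚ is any sequence of rationals, then there exists A ∈ p such that the set {x(n) : n ∈ A} is nowhere dense in ℚ (its closure in ℚ has empty interior). -/
/-!
Let `p` be a P-point and `x` a sequence in a first countable Hausdorff space without isolated
points. Every basic neighbourhood `b n k` of `x n` contains two disjoint nonempty open sets, and the
image ultrafilter of `p` under `x` omits one of them; call it `V n k`. The P-point property, applied
to the countably many sets `x ⁻¹' (V n k)ᶜ`, yields a single `B ∈ p` for which `x '' B` meets each
`V n k` in a finite, hence nowhere dense, set. As every neighbourhood of every point of `x '' B`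
contains some `V n k`, the whole of `x '' B` is nowhere dense.
-/

open Set Topology

section NowhereDense

variable {X : Type*} [TopologicalSpace X]

lemma isNowhereDense_of_forall_mem_nhds {S : Set X}
    (h : ∀ a ∈ S, ∀ U ∈ 𝓝 a, ∃ V ⊆ U, IsOpen V ∧ V.Nonempty ∧ IsNowhereDense (V ∩ S)) :
    IsNowhereDense S := by
  by_contra hS
  obtain ⟨y, hy⟩ : (interior (closure S)).Nonempty := nonempty_iff_ne_empty.2 hS
  obtain ⟨a, ha, haS⟩ := mem_closure_iff.1 (interior_subset hy) _ isOpen_interior hy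
  obtain ⟨V, hVS, hV, hVne, hVnd⟩ := h a haS _ (isOpen_interior.mem_nhds ha)
  have hV_closure : V ⊆ closure (V ∩ S) := fun v hv =>
    hV.inter_closure ⟨hv, interior_subset (hVS hv)⟩
  exact (hVne.mono (interior_maximal hV_closure hV)).ne_empty hVnd

variable [∀ a : X, (𝓝[≠] a).NeBot]

lemma isNowhereDense_of_finite [T1Space X] {S : Set X} (hS : S.Finite) : IsNowhereDense S := by
  rw [IsNowhereDense, hS.isClosed.closure_eq, interior_eq_empty_iff_dense_compl,
    compl_eq_univ_sdiff]
  exact dense_univ.sdiff_finite hS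

lemma exists_disjoint_isOpen_subset_of_mem_nhds [T2Space X] {a : X} {U : Set X} (hU : U ∈ 𝓝 a) :
    ∃ V ⊆ U, ∃ W ⊆ U, IsOpen V ∧ IsOpen W ∧ V.Nonempty ∧ W.Nonempty ∧ Disjoint V W := by
  obtain ⟨b, hb, c, hc, hbc⟩ := (infinite_of_mem_nhds a (interior_mem_nhds.2 hU)).nontrivial
  obtain ⟨V, W, hV, hW, hbV, hcW, hVW⟩ := t2_separation hbc
  exact ⟨interior U ∩ V, inter_subset_left.trans interior_subset,
    interior U ∩ W, inter_subset_left.trans interior_subset,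
    isOpen_interior.inter hV, isOpen_interior.inter hW, ⟨b, hb, hbV⟩, ⟨c, hc, hcW⟩,
    hVW.mono inter_subset_right inter_subset_right⟩

lemma exists_isOpen_subset_notMem_ultrafilter_of_mem_nhds [T2Space X] (q : Ultrafilter X) {a : X}
    {U : Set X} (hU : U ∈ 𝓝 a) : ∃ V ⊆ U, IsOpen V ∧ V.Nonempty ∧ V ∉ q := by
  obtain ⟨V, hVU, W, hWU, hV, hW, hVne, hWne, hVW⟩ := exists_disjoint_isOpen_subset_of_mem_nhds hU
  by_cases hVq : V ∈ q
  · exact ⟨W, hWU, hW, hWne, fun hWq =>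
      (q.nonempty_of_mem (Filter.inter_mem hVq hWq)).ne_empty hVW.inter_eq⟩
  · exact ⟨V, hVU, hV, hVne, hVq⟩

end NowhereDense

lemma IsPPoint.exists_mem_forall_finite_sdiff {ι : Type*} [Countable ι] {p : Ultrafilter ℕ}
    (hP : IsPPoint p) (A : ι → Set ℕ) (hA : ∀ i, A i ∈ p) : ∃ B ∈ p, ∀ i, (B \ A i).Finite := by
  cases isEmpty_or_nonempty ι
  · exact ⟨univ, Filter.univ_mem, isEmptyElim⟩
  · obtain ⟨f, hf⟩ := exists_surjective_nat ι
    obtain ⟨B, hB, hBA⟩ := hP (A ∘ f) fun n => hA (f n)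
    exact ⟨B, hB, hf.forall.2 hBA⟩

theorem ppoint_is_nowhere_dense_ultrafilter_general {X : Type*} [TopologicalSpace X] [T2Space X]
    [FirstCountableTopology X] [∀ a : X, (𝓝[≠] a).NeBot] {p : Ultrafilter ℕ} (hP : IsPPoint p)
    (x : ℕ → X) : ∃ A ∈ p, IsNowhereDense (x '' A) := by
  choose b hb using fun n => (𝓝 (x n)).exists_antitone_basis
  choose V hVb hV hVne hVp using fun n k =>
    exists_isOpen_subset_notMem_ultrafilter_of_mem_nhds (p.map x) ((hb n).mem k)
  obtain ⟨B, hB, hBV⟩ := hP.exists_mem_forall_finite_sdiff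
    (fun i : ℕ × ℕ => (x ⁻¹' V i.1 i.2)ᶜ) fun i => Ultrafilter.compl_mem_iff_notMem.2 (hVp i.1 i.2)
  have hfinite (n k : ℕ) : (V n k ∩ x '' B).Finite := by
    rw [inter_comm, ← image_inter_preimage, ← sdiff_compl]
    exact (hBV (n, k)).image x
  refine ⟨B, hB, isNowhereDense_of_forall_mem_nhds ?_⟩
  rintro _ ⟨n, -, rfl⟩ U hU
  obtain ⟨k, hk⟩ := (hb n).mem_iff.1 hU
  exact ⟨V n k, (hVb n k).trans hk, hV n k, hVne n k, isNowhereDense_of_finite (hfinite n k)⟩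

theorem ppoint_is_nowhere_dense_ultrafilter (p : Ultrafilter ℕ)
    (hfree : IsFreeUF p) (hP : IsPPoint p) (x : ℕ → ℚ) :
    ∃ A ∈ p, interior (closure (x '' A)) = (∅ : Set ℚ) :=
  ppoint_is_nowhere_dense_ultrafilter_general hP x
end

section
/- Suppose that for every pair of commuting continuous maps F, G from the Cantor cube 2^𝔠 (realized as the product space ℝ → Bool with Bool discrete) to itself there exist a free ultrafilter p on ℕ and a point x ∈ 2^𝔠 such that F^[n](x) → x and G^[n](x) → x along p. Then there exists a single free ultrafilter p on ℕ such that for every pair of commuting continuous maps f, g from the Cantor set 2^ω (the product space ℕ → Bool) to itself there is x ∈ 2^ω with f^[n](x) → x and g^[n](x) → x along p. -/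
open Filter

/-!
A continuous self-map of the Cantor set is determined by its values on a countable dense set, so the
commuting pairs of such maps can be indexed by `ℝ`. Acting coordinatewise, all these pairs together
form one commuting pair on `(2^ω)^ℝ`, which is homeomorphic to `2^𝔠`. A jointly recurrent point of
the product pair is coordinatewise jointly recurrent along the same ultrafilter.
-/

open Cardinal Function TopologicalSpace Topology

universe u

section JointRecurrence

variable {X Y : Type*} [TopologicalSpace X] [TopologicalSpace Y]

/-- The point `x` is the limit along `l` of both its `f`-orbit and its `g`-orbit. The filter is
arbitrary, although the case of interest is that of a free ultrafilter. -/
def IsJointlyRecurrent (l : Filter ℕ) (f g : X → X) (x : X) : Prop :=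
  Tendsto (fun n : ℕ => f^[n] x) l (𝓝 x) ∧ Tendsto (fun n : ℕ => g^[n] x) l (𝓝 x)

/-- Joint recurrence along a prescribed ultrafilter: every commuting pair of continuous self-maps
of `X` has a jointly recurrent point along `p`. -/
def HasJointRecurrenceAlong (p : Ultrafilter ℕ) (X : Type*) [TopologicalSpace X] : Prop :=
  ∀ f g : X → X, Continuous f → Continuous g → f ∘ g = g ∘ f →
    ∃ x : X, IsJointlyRecurrent p f g x

/-- Joint recurrence along an ultrafilter with property `P` (such as being free) that may depend on
the commuting pair of continuous self-maps of `X`. -/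
def HasJointRecurrence (P : Ultrafilter ℕ → Prop) (X : Type*) [TopologicalSpace X] : Prop :=
  ∀ f g : X → X, Continuous f → Continuous g → f ∘ g = g ∘ f →
    ∃ p : Ultrafilter ℕ, P p ∧ ∃ x : X, IsJointlyRecurrent p f g x

theorem tendsto_iterate_of_semiconj {l : Filter ℕ} {π : X → Y} {f : X → X} {f' : Y → Y} {x : X}
    (hx : Tendsto (fun n : ℕ => f^[n] x) l (𝓝 x)) (hπ : ContinuousAt π x)
    (hf : Semiconj π f f') : Tendsto (fun n : ℕ => f'^[n] (π x)) l (𝓝 (π x)) :=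
  (hπ.tendsto.comp hx).congr fun n => hf.iterate_right n x

theorem IsJointlyRecurrent.map {l : Filter ℕ} {π : X → Y} {f g : X → X} {f' g' : Y → Y} {x : X}
    (hx : IsJointlyRecurrent l f g x) (hπ : ContinuousAt π x) (hf : Semiconj π f f')
    (hg : Semiconj π g g') : IsJointlyRecurrent l f' g' (π x) :=
  ⟨tendsto_iterate_of_semiconj hx.1 hπ hf, tendsto_iterate_of_semiconj hx.2 hπ hg⟩

variable {P : Ultrafilter ℕ → Prop}

theorem HasJointRecurrence.of_retract (h : HasJointRecurrence P X) {r : X → Y} {s : Y → X}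
    (hr : Continuous r) (hs : Continuous s) (hrs : LeftInverse r s) : HasJointRecurrence P Y := by
  have semiconj_lift (f : Y → Y) : Semiconj r (s ∘ f ∘ r) f := fun x => hrs (f (r x))
  have lift_comp (f g : Y → Y) : (s ∘ f ∘ r) ∘ (s ∘ g ∘ r) = s ∘ (f ∘ g) ∘ r :=
    funext fun x => congrArg (s ∘ f) (hrs (g (r x)))
  intro f g hf hg hfg
  obtain ⟨p, hp, x, hx⟩ := h (s ∘ f ∘ r) (s ∘ g ∘ r) (hs.comp (hf.comp hr))
    (hs.comp (hg.comp hr)) (by rw [lift_comp, lift_comp, hfg])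
  exact ⟨p, hp, r x, hx.map hr.continuousAt (semiconj_lift f) (semiconj_lift g)⟩

theorem HasJointRecurrence.exists_forall_of_pi {ι : Type*} {X : ι → Type*}
    [∀ i, TopologicalSpace (X i)] (h : HasJointRecurrence P (∀ i, X i)) (f g : ∀ i, C(X i, X i))
    (hfg : ∀ i, ⇑(f i) ∘ g i = g i ∘ f i) :
    ∃ p : Ultrafilter ℕ, P p ∧ ∀ i, ∃ x : X i, IsJointlyRecurrent p (f i) (g i) x := by
  have comm_piMap : Pi.map (fun i => f i) ∘ Pi.map (fun i => g i) =
      Pi.map (fun i => g i) ∘ Pi.map (fun i => f i) :=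
    funext fun x => funext fun i => congrFun (hfg i) (x i)
  obtain ⟨p, hp, x, hx⟩ := h _ _ (.piMap fun i => (f i).continuous)
    (.piMap fun i => (g i).continuous) comm_piMap
  exact ⟨p, hp, fun i => ⟨x i, hx.map (continuousAt_apply i x) (fun _ => rfl) fun _ => rfl⟩⟩

end JointRecurrence

theorem mk_continuousMap_le_power_aleph0 (X Y : Type u) [TopologicalSpace X] [TopologicalSpace Y]
    [SeparableSpace X] [Nonempty X] [T2Space Y] : #C(X, Y) ≤ #Y ^ ℵ₀ := by
  have hdense := denseRange_denseSeq X
  have hinj : Injective fun (f : C(X, Y)) (n : ℕ) => f (denseSeq X n) :=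
    fun f g hfg => DFunLike.coe_injective (hdense.equalizer f.continuous g.continuous hfg)
  simpa using mk_le_of_injective hinj

theorem exists_surjective_commuting_pairs {ι X : Type u} [TopologicalSpace X]
    [SeparableSpace X] [Nonempty X] [T2Space X] (hι : #X ^ ℵ₀ ≤ #ι) :
    ∃ s : ι → {q : C(X, X) × C(X, X) // ⇑q.1 ∘ q.2 = q.2 ∘ q.1}, Surjective s := by
  have mk_pairs_le : #{q : C(X, X) × C(X, X) // ⇑q.1 ∘ q.2 = q.2 ∘ q.1} ≤ #ι :=
    calc #{q : C(X, X) × C(X, X) // ⇑q.1 ∘ q.2 = q.2 ∘ q.1}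
      _ ≤ #(C(X, X) × C(X, X)) := mk_subtype_le _
      _ = #C(X, X) * #C(X, X) := mul_def _ _
      _ ≤ #X ^ ℵ₀ * #X ^ ℵ₀ := by gcongr <;> exact mk_continuousMap_le_power_aleph0 X X
      _ = #X ^ ℵ₀ := by rw [← power_add, aleph0_add_aleph0]
      _ ≤ #ι := hι
  exact Function.exists_surjective_iff.2
    ⟨⟨fun _ => ⟨(.id X, .id X), rfl⟩⟩, (le_def _ _).1 mk_pairs_le⟩

theorem nonempty_homeomorph_pi_pi {ι κ : Type u} (X : Type*) [TopologicalSpace X] [Infinite ι]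
    [Nonempty κ] (hκ : #κ ≤ #ι) : Nonempty ((ι → X) ≃ₜ (ι → κ → X)) := by
  obtain ⟨e⟩ : Nonempty (ι ≃ ι × κ) := by
    rw [← Cardinal.eq, mk_prod, lift_id, lift_id, mul_eq_left (aleph0_le_mk ι) hκ (mk_ne_zero κ)]
  let curry : (ι × κ → X) ≃ₜ (ι → κ → X) :=
    { toEquiv := Equiv.curry ι κ X
      continuous_toFun := continuous_pi fun i => continuous_pi fun j => continuous_apply (i, j)
      continuous_invFun := continuous_pi fun ij => continuous_apply_apply ij.1 ij.2 }
  exact ⟨(Homeomorph.piCongrLeft (Y := fun _ => X) e).trans curry⟩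

theorem single_ultrafilter_for_multiple_recurrence_general {P : Ultrafilter ℕ → Prop}
    {ι X : Type u} [TopologicalSpace X] [SeparableSpace X] [Nonempty X]
    [T2Space X] (hι : #X ^ ℵ₀ ≤ #ι) (h : HasJointRecurrence P (ι → X)) :
    ∃ p : Ultrafilter ℕ, P p ∧ HasJointRecurrenceAlong p X := by
  obtain ⟨s, hs⟩ := exists_surjective_commuting_pairs hι
  obtain ⟨p, hp, hrec⟩ := h.exists_forall_of_pi (fun i => (s i).1.1) (fun i => (s i).1.2)
    fun i => (s i).2
  refine ⟨p, hp, fun f g hf hg hfg => ?_⟩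
  obtain ⟨i, hi⟩ := hs ⟨(⟨f, hf⟩, ⟨g, hg⟩), hfg⟩
  simpa only [hi, ContinuousMap.coe_mk] using hrec i

theorem single_ultrafilter_for_multiple_recurrence
    (hcube : ∀ F G : (ℝ → Bool) → (ℝ → Bool),
      Continuous F → Continuous G → F ∘ G = G ∘ F →
      ∃ (p : Ultrafilter ℕ), IsFreeUF p ∧ ∃ x : ℝ → Bool,
        Tendsto (fun n : ℕ => F^[n] x) (p : Filter ℕ) (nhds x) ∧
        Tendsto (fun n : ℕ => G^[n] x) (p : Filter ℕ) (nhds x)) :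
    ∃ p : Ultrafilter ℕ, IsFreeUF p ∧
      ∀ f g : (ℕ → Bool) → (ℕ → Bool),
        Continuous f → Continuous g → f ∘ g = g ∘ f →
        ∃ x : ℕ → Bool,
          Tendsto (fun n : ℕ => f^[n] x) (p : Filter ℕ) (nhds x) ∧
          Tendsto (fun n : ℕ => g^[n] x) (p : Filter ℕ) (nhds x) := by
  obtain ⟨e⟩ := nonempty_homeomorph_pi_pi (ι := ℝ) (κ := ℕ) Bool (by simp)
  exact single_ultrafilter_for_multiple_recurrence_general (ι := ℝ) (by simp [mk_real])
    (HasJointRecurrence.of_retract hcube e.continuous e.symm.continuous e.right_inv)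
end

section
/- No point of ℕ* has countable tightness: for every free ultrafilter p on ℕ there exists a set S ⊆ ℕ* \ {p} such that p lies in the closure of S in ℕ* but p does not lie in the closure of C for any countable subset C of S. -/
/-- `ℕ* = βℕ \ ℕ`: the subspace of free ultrafilters on `ℕ`. -/
abbrev NstarSpace : Type := {u : Ultrafilter ℕ // IsFreeUF u}

/-!
If every Gδ set containing `p` is a neighbourhood of `p` (`p` is a P-point), then the complement of
a countable set missing `p` is a neighbourhood of `p`; as `p` is not isolated, `S = {p}ᶜ` works.
Otherwise some `G = ⋂ n, (A n)*` contains `p` without being a neighbourhood of it, and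
`S = interior G` works, because a nonempty Gδ set has nonempty interior (so `p ∈ closure S`), while
the sets witnessing that countably many points lie in `interior G` can be interpolated by a single
`F` with `F* ⊆ G`, which confines their closure to `interior G`.
-/

open Filter Set Topology

section AlmostInclusion

variable {α ι κ : Type*}

theorem exists_injective_forall_mem_of_infinite_s16 {A : ℕ → Set α} (hA : ∀ n, (A n).Infinite) :
    ∃ x : ℕ → α, x.Injective ∧ ∀ n, x n ∈ A n := by
  classical
  choose t htA htcard using fun n => (hA n).exists_subset_card_eq (n + 1)
  have hall (s : Finset ℕ) : s.card ≤ (s.biUnion t).card := by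
    rcases s.eq_empty_or_nonempty with rfl | hs
    · simp
    calc s.card ≤ (Finset.range (s.max' hs + 1)).card :=
          Finset.card_le_card fun n hn =>
            Finset.mem_range.mpr (Nat.lt_succ_of_le (s.le_max' n hn))
      _ = (t (s.max' hs)).card := by rw [Finset.card_range, htcard]
      _ ≤ (s.biUnion t).card :=
          Finset.card_le_card (Finset.subset_biUnion_of_mem t (s.max'_mem hs))
  obtain ⟨x, hx, hxt⟩ := (Finset.all_card_le_biUnion_card_iff_exists_injective t).mp hall
  exact ⟨x, hx, fun n => htA n (hxt n)⟩

theorem exists_infinite_forall_diff_finite [Countable ι] {A : ι → Set α}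
    (hA : ∀ s : Set ι, s.Finite → (⋂ i ∈ s, A i).Infinite) :
    ∃ D : Set α, D.Infinite ∧ ∀ i, (D \ A i).Finite := by
  obtain ⟨e, he⟩ := exists_injective_nat ι
  obtain ⟨x, hx, hxA⟩ := exists_injective_forall_mem_of_infinite_s16
    fun n => hA (e ⁻¹' Iic n) ((finite_Iic n).preimage he.injOn)
  refine ⟨range x, infinite_range_of_injective hx, fun i => ?_⟩
  refine ((finite_Iio (e i)).image x).subset ?_
  rintro _ ⟨⟨n, rfl⟩, hn⟩
  have hni : n < e i := lt_of_not_ge fun hin => hn (mem_iInter₂.mp (hxA n) i hin)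
  exact mem_image_of_mem x hni

theorem exists_interpolant_of_forall_diff_finite [Countable ι] [Countable κ]
    {E : ι → Set α} {A : κ → Set α} (hEA : ∀ i k, (E i \ A k).Finite) :
    ∃ F : Set α, (∀ i, (E i \ F).Finite) ∧ ∀ k, (F \ A k).Finite := by
  obtain ⟨e, he⟩ := exists_injective_nat ι
  obtain ⟨g, hg⟩ := exists_injective_nat κ
  refine ⟨⋃ i, E i ∩ ⋂ k ∈ g ⁻¹' Iic (e i), A k, fun i => ?_, fun k => ?_⟩
  · refine (((finite_Iic (e i)).preimage hg.injOn).biUnion fun k _ => hEA i k).subset ?_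
    rintro x ⟨hxE, hxF⟩
    have hxA : x ∉ ⋂ k ∈ g ⁻¹' Iic (e i), A k :=
      fun hxA => hxF (mem_iUnion_of_mem i ⟨hxE, hxA⟩)
    simp only [mem_iInter, not_forall] at hxA
    obtain ⟨k, hk, hxk⟩ := hxA
    exact mem_biUnion hk ⟨hxE, hxk⟩
  · refine (((finite_Iio (g k)).preimage he.injOn).biUnion fun i _ => hEA i k).subset ?_
    rintro x ⟨hxF, hxk⟩
    obtain ⟨i, hxE, hxA⟩ := mem_iUnion.mp hxF
    have hik : e i < g k := lt_of_not_ge fun hki => hxk (mem_iInter₂.mp hxA k hki)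
    exact mem_biUnion hik ⟨hxE, hxk⟩

theorem exists_disjoint_infinite_subsets {B : Set α} (hB : B.Infinite) :
    ∃ D ⊆ B, ∃ E ⊆ B, Disjoint D E ∧ D.Infinite ∧ E.Infinite := by
  obtain ⟨D, E, rfl, hDE, hcard⟩ := hB.exists_union_disjoint_cardinal_eq_of_infinite
  obtain ⟨e⟩ := Cardinal.eq.mp hcard
  have hiff : D.Finite ↔ E.Finite := e.finite_iff
  have hD : D.Infinite := fun hD => hB (hD.union (hiff.mp hD))
  exact ⟨D, subset_union_left, E, subset_union_right, hDE, hD, mt hiff.mpr hD⟩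

end AlmostInclusion

/-- The Stone–Čech remainder `α* = βα \ α` of the discrete space `α`: the ultrafilters all of whose
members are infinite, with the topology induced from `Ultrafilter α`. -/
abbrev FreeUltrafilter (α : Type*) : Type _ := {u : Ultrafilter α // ∀ A ∈ u, A.Infinite}

namespace FreeUltrafilter

variable {α ι : Type*} {p : FreeUltrafilter α} {A B : Set α} {G : Set (FreeUltrafilter α)}

/-- The trace `A*` on `α*` of the basic clopen set of ultrafilters containing `A`. -/
def trace (A : Set α) : Set (FreeUltrafilter α) := {p | A ∈ p.1}

theorem isClopen_trace (A : Set α) : IsClopen (trace A) :=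
  IsClopen.preimage ⟨ultrafilter_isClosed_basic A, ultrafilter_isOpen_basic A⟩
    continuous_subtype_val

theorem hasBasis_nhds (p : FreeUltrafilter α) : (𝓝 p).HasBasis (· ∈ p.1) trace := by
  rw [nhds_induced]
  refine (ultrafilterBasis_is_basis.nhds_hasBasis.comap _).to_hasBasis ?_ fun A hA =>
    ⟨{u | A ∈ u}, ⟨⟨A, rfl⟩, hA⟩, Subset.rfl⟩
  rintro _ ⟨⟨A, rfl⟩, hA⟩
  exact ⟨A, hA, Subset.rfl⟩

theorem trace_nonempty (hA : A.Infinite) : (trace A).Nonempty := by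
  have : (cofinite ⊓ 𝓟 A).NeBot := hA.cofinite_inf_principal_neBot
  obtain ⟨u, hu⟩ := Ultrafilter.exists_le (cofinite ⊓ 𝓟 A)
  obtain ⟨hcof, hAu⟩ := le_inf_iff.mp hu
  exact ⟨⟨u, fun B hB hfin => Ultrafilter.compl_notMem_iff.mpr hB (hcof hfin.compl_mem_cofinite)⟩,
    le_principal_iff.mp hAu⟩

theorem trace_mono (hAB : A ⊆ B) : trace A ⊆ trace B :=
  fun _ hA => mem_of_superset hA hAB

theorem disjoint_trace (hAB : Disjoint A B) : Disjoint (trace A) (trace B) :=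
  disjoint_left.mpr fun p hA hB =>
    p.1.empty_notMem (hAB.inter_eq ▸ inter_mem hA hB)

theorem trace_subset_trace_iff : trace A ⊆ trace B ↔ (A \ B).Finite := by
  constructor
  · intro hAB
    by_contra hinf
    obtain ⟨p, hp⟩ := trace_nonempty hinf
    exact disjoint_left.mp (disjoint_trace disjoint_sdiff_left) hp
      (hAB (trace_mono sdiff_subset hp))
  · intro hfin p hA
    by_contra hB
    exact p.2 _ (inter_mem hA (Ultrafilter.compl_mem_iff_notMem.mpr hB)) hfin

theorem mem_interior_iInter_trace_iff {A : ι → Set α} :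
    p ∈ interior (⋂ i, trace (A i)) ↔ ∃ E ∈ p.1, ∀ i, (E \ A i).Finite := by
  simp only [mem_interior_iff_mem_nhds, (hasBasis_nhds p).mem_iff, subset_iInter_iff,
    trace_subset_trace_iff]

theorem exists_iInter_trace_subset_of_isGδ (hG : IsGδ G) (hp : p ∈ G) :
    ∃ A : ℕ → Set α, p ∈ ⋂ n, trace (A n) ∧ ⋂ n, trace (A n) ⊆ G := by
  obtain ⟨U, hU, rfl⟩ := hG.eq_iInter_nat
  choose A hAp hAU using fun n =>
    (hasBasis_nhds p).mem_iff.mp ((hU n).mem_nhds (mem_iInter.mp hp n))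
  exact ⟨A, mem_iInter.mpr hAp, iInter_mono hAU⟩

instance : PerfectSpace (FreeUltrafilter α) := by
  refine perfectSpace_iff_forall_not_isolated.mpr fun p => ⟨fun hbot => ?_⟩
  obtain ⟨B, hBp, hB⟩ := (hasBasis_nhds p).mem_iff.mp
    ((isOpen_singleton_iff_punctured_nhds p).mpr hbot |>.mem_nhds rfl)
  obtain ⟨D, hDB, E, hEB, hDE, hD, hE⟩ := exists_disjoint_infinite_subsets (p.2 B hBp)
  obtain ⟨q, hqD⟩ := trace_nonempty hD
  obtain ⟨r, hrE⟩ := trace_nonempty hE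
  have hqp : q = p := hB (trace_mono hDB hqD)
  have hrp : r = p := hB (trace_mono hEB hrE)
  exact disjoint_left.mp (disjoint_trace hDE) hqD (hqp ▸ hrp ▸ hrE)

theorem nonempty_interior_of_isGδ (hG : IsGδ G) (hne : G.Nonempty) : (interior G).Nonempty := by
  obtain ⟨p, hp⟩ := hne
  obtain ⟨A, hAp, hAG⟩ := exists_iInter_trace_subset_of_isGδ hG hp
  obtain ⟨D, hD, hDA⟩ := exists_infinite_forall_diff_finite fun s hs =>
    p.2 _ ((biInter_mem hs).mpr fun n _ => mem_iInter.mp hAp n)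
  obtain ⟨q, hqD⟩ := trace_nonempty hD
  exact ⟨q, interior_mono hAG (mem_interior_iInter_trace_iff.mpr ⟨D, hqD, hDA⟩)⟩

theorem subset_closure_interior_of_isGδ (hG : IsGδ G) : G ⊆ closure (interior G) := by
  intro p hp
  refine mem_closure_iff.mpr fun U hU hpU => ?_
  have hUG : (interior (U ∩ G)).Nonempty :=
    nonempty_interior_of_isGδ (hU.isGδ.inter hG) ⟨p, hpU, hp⟩
  rwa [interior_inter, hU.interior_eq] at hUG

theorem closure_subset_interior_iInter_trace [Countable ι] {A : ι → Set α}
    {C : Set (FreeUltrafilter α)} (hC : C.Countable) (hCA : C ⊆ interior (⋂ i, trace (A i))) :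
    closure C ⊆ interior (⋂ i, trace (A i)) := by
  have := hC.to_subtype
  choose E hEq hEA using fun q : C => mem_interior_iInter_trace_iff.mp (hCA q.2)
  obtain ⟨F, hEF, hFA⟩ := exists_interpolant_of_forall_diff_finite hEA
  have hCF : C ⊆ trace F := fun q hq => trace_subset_trace_iff.mpr (hEF ⟨q, hq⟩) (hEq ⟨q, hq⟩)
  calc closure C ⊆ trace F := closure_minimal hCF (isClopen_trace F).isClosed
    _ ⊆ interior (⋂ i, trace (A i)) := fun _ hF => mem_interior_iInter_trace_iff.mpr ⟨F, hF, hFA⟩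

end FreeUltrafilter

open FreeUltrafilter in
theorem no_point_of_Nstar_has_countable_tightness_general {α : Type*} (p : FreeUltrafilter α) :
    ∃ S : Set (FreeUltrafilter α), p ∉ S ∧ p ∈ closure S ∧
      ∀ C ⊆ S, C.Countable → p ∉ closure C := by
  by_cases hP : ∀ G : Set (FreeUltrafilter α), IsGδ G → p ∈ G → G ∈ 𝓝 p
  · refine ⟨{p}ᶜ, fun hp => hp rfl, dense_compl_singleton p p, fun C hCp hC hp => ?_⟩
    have hCc : Cᶜ ∈ 𝓝 p := hP Cᶜ hC.isGδ_compl fun hpC => hCp hpC rfl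
    exact mem_closure_iff_nhds.mp hp Cᶜ hCc |>.ne_empty (compl_inter_self C)
  · push Not at hP
    obtain ⟨G, hG, hpG, hGp⟩ := hP
    obtain ⟨A, hpA, hAG⟩ := exists_iInter_trace_subset_of_isGδ hG hpG
    have hAδ : IsGδ (⋂ n, trace (A n)) :=
      IsGδ.iInter_of_isOpen fun n => (isClopen_trace (A n)).isOpen
    have hpint : p ∉ interior (⋂ n, trace (A n)) := fun hp =>
      hGp (mem_of_superset (mem_interior_iff_mem_nhds.mp hp) hAG)
    exact ⟨interior (⋂ n, trace (A n)), hpint, subset_closure_interior_of_isGδ hAδ hpA,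
      fun C hCA hC hp => hpint (closure_subset_interior_iInter_trace hC hCA hp)⟩

theorem no_point_of_Nstar_has_countable_tightness
    (p : Ultrafilter ℕ) (hp : IsFreeUF p) :
    ∃ S : Set NstarSpace, (⟨p, hp⟩ : NstarSpace) ∉ S ∧
      (⟨p, hp⟩ : NstarSpace) ∈ closure S ∧
      ∀ C ⊆ S, C.Countable → (⟨p, hp⟩ : NstarSpace) ∉ closure C :=
  no_point_of_Nstar_has_countable_tightness_general (⟨p, hp⟩ : FreeUltrafilter ℕ)
end
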